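/- arXiv:2404.15448 — 3 statements merged into one kernel-verified Lean document; each statement's English description precedes it below -/
import Mathlib

section
/- Let μ be a translation bounded complex measure on ℝ^d whose distributional Fourier transform μ̂ is a pure point measure. Then μ is an almost periodic measure: for every continuous compactly supported ψ : ℝ^d → ℂ, the convolution (μ⋆ψ)(t) = ∫ ψ(t−x) dμ(x) is a Bohr almost periodic function of t. -/
open MeasureTheory Metric Filter Topology Complex SchwartzMap
open scoped RealInnerProductSpace ENNReal

noncomputable section

/-- A continuous function `g` is *Bohr almost periodic* if for every `ε > 0` its set of
`ε`-almost periods is relatively dense. -/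
def IsBohrAP {V : Type*} [SeminormedAddCommGroup V] (g : V → ℂ) : Prop :=
  Continuous g ∧ ∀ ε : ℝ, 0 < ε → ∃ L : ℝ, 0 < L ∧ ∀ x : V, ∃ τ : V,
    dist τ x < L ∧ ∀ y : V, ‖g (y + τ) - g y‖ < ε

/-- A (locally finite) complex measure on `V`, given by its polar decomposition: the total
variation measure `var` together with a unimodular density `den`, so that
`μ(A) = ∫_A den d(var)`. -/
structure CMeas (V : Type*) [MeasurableSpace V] where
  var : Measure V
  den : V → ℂ
  norm_den : ∀ x, ‖den x‖ = 1
  measurable_den : Measurable den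

namespace CMeas

variable {V : Type*} [MeasurableSpace V]

/-- Pairing of a complex measure with a test function: `∫ f dμ = ∫ f·den d(var)`. -/
def pair (μ : CMeas V) (f : V → ℂ) : ℂ := ∫ x, f x * μ.den x ∂μ.var

/-- Local finiteness: finite total variation on compact sets. -/
def locFinite [TopologicalSpace V] (μ : CMeas V) : Prop :=
  ∀ K : Set V, IsCompact K → μ.var K < ⊤

end CMeas

/-- Euclidean space `ℝ^d`. -/
abbrev Ed (d : ℕ) := EuclideanSpace ℝ (Fin d)

variable {d : ℕ}

/-- The complex measure is a temperate measure: every Schwartz function is integrable with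
respect to its total variation. -/
def CMeas.temperate (μ : CMeas (Ed d)) : Prop :=
  ∀ φ : SchwartzMap (Ed d) ℂ, Integrable (fun x => φ x * μ.den x) μ.var

/-- A pure point complex measure on `V`, described by its (countably supported) mass function. -/
structure PPM (V : Type*) where
  mass : V → ℂ
  countable : (Function.support mass).Countable

/-- The total variation of a pure point measure, evaluated on a set. -/
def PPM.var {V : Type*} (μ : PPM V) (A : Set V) : ℝ≥0∞ :=
  ∑' x : A, (‖μ.mass x‖₊ : ℝ≥0∞)

/-- Pairing of a pure point measure with a test function. -/
def PPM.pair {V : Type*} (μ : PPM V) (φ : V → ℂ) : ℂ := ∑' x, μ.mass x * φ x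

/-- Local finiteness of a pure point measure. -/
def PPM.locFinite (μ : PPM (Ed d)) : Prop := ∀ r : ℝ, μ.var (ball 0 r) < ⊤


/-- The character `t ↦ exp (2πi ⟪t, y⟫)`. -/
def chr (t y : Ed d) : ℂ := Complex.exp ((2 * Real.pi * ⟪t, y⟫ : ℝ) * Complex.I)

lemma chr_norm (t y : Ed d) : ‖chr t y‖ = 1 := by
  unfold chr; exact Complex.norm_exp_ofReal_mul_I _

lemma chr_add (s t y : Ed d) : chr (s + t) y = chr s y * chr t y := by
  unfold chr; rw [← Complex.exp_add, inner_add_left]; congr 1; push_cast; ring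

lemma chr_sub_mul (s t y : Ed d) : chr (s - t) y * chr t y = chr s y := by
  rw [← chr_add, sub_add_cancel]

lemma chr_relDense (F : Finset (Ed d)) (δ : ℝ) (hδ : 0 < δ) :
    ∃ L : ℝ, 0 < L ∧ ∀ x : Ed d, ∃ τ : Ed d, dist τ x < L ∧ ∀ y ∈ F, ‖chr τ y - 1‖ < δ := by
  let f : Ed d → (F → ℂ) := fun x y => chr x y
  have htb : TotallyBounded (Set.range f) := by
    refine (isCompact_closedBall (0 : F → ℂ) 1).totallyBounded.subset ?_
    rintro _ ⟨x, rfl⟩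
    rw [mem_closedBall_zero_iff, pi_norm_le_iff_of_nonneg zero_le_one]
    intro y
    exact (chr_norm _ _).le
  obtain ⟨s, hs, hsf, hcov⟩ := Metric.finite_approx_of_totallyBounded htb δ hδ
  obtain ⟨u, hu⟩ : ∃ u : Set (Ed d), u.Finite ∧ s ⊆ f '' u := by
    have hs' : ∀ z : F → ℂ, z ∈ s → ∃ x, f x = z := fun z hz => hs hz
    choose! g hg using hs'
    exact ⟨g '' s, hsf.image g, fun z hz => ⟨g z, ⟨z, hz, rfl⟩, hg z hz⟩⟩
  obtain ⟨L, hL⟩ := hu.1.isBounded.exists_norm_le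
  refine ⟨|L| + 1, by positivity, fun x => ?_⟩
  have := hcov ⟨x, rfl⟩
  simp only [Set.mem_iUnion] at this
  obtain ⟨z, hz, hxz⟩ := this
  obtain ⟨x', hx', rfl⟩ := hu.2 hz
  refine ⟨x - x', ?_, fun y hy => ?_⟩
  · rw [dist_eq_norm]
    have := hL x' hx'
    simp only [sub_sub_cancel_left, norm_neg]
    linarith [le_abs_self L]
  · have h1 : dist (f x ⟨y, hy⟩) (f x' ⟨y, hy⟩) < δ :=
      lt_of_le_of_lt (dist_le_pi_dist _ _ _) hxz
    have h2 : chr x y - chr x' y = (chr (x - x') y - 1) * chr x' y := by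
      rw [sub_mul, chr_sub_mul, one_mul]
    rw [dist_eq_norm] at h1
    change ‖chr x y - chr x' y‖ < δ at h1
    rwa [h2, norm_mul, chr_norm, mul_one] at h1

lemma series_ap (a : Ed d → ℂ) (ha : Summable fun y => ‖a y‖) (ε : ℝ) (hε : 0 < ε) :
    ∃ L : ℝ, 0 < L ∧ ∀ x : Ed d, ∃ τ : Ed d, dist τ x < L ∧ ∀ t : Ed d,
      ‖(∑' y, a y * chr (t + τ) y) - ∑' y, a y * chr t y‖ ≤ ε := by
  obtain ⟨F, hF⟩ : ∃ F : Finset (Ed d), ∑' y, ‖a y‖ - ∑ y ∈ F, ‖a y‖ < ε / 4 := by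
    have := ha.hasSum.eventually (lt_mem_nhds (show ∑' y, ‖a y‖ - ε / 4 < ∑' y, ‖a y‖ by linarith))
    obtain ⟨F, hF⟩ := this.exists
    exact ⟨F, by linarith⟩
  set S := ∑ y ∈ F, ‖a y‖ with hS
  have hS0 : 0 ≤ S := Finset.sum_nonneg fun _ _ => norm_nonneg _
  obtain ⟨L, hL, h⟩ := chr_relDense F (ε / (2 * (S + 1))) (by positivity)
  refine ⟨L, hL, fun x => ?_⟩
  obtain ⟨τ, hτ, hτF⟩ := h x
  refine ⟨τ, hτ, fun t => ?_⟩
  have hsum : ∀ t, Summable fun y => a y * chr t y := fun t =>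
    Summable.of_norm (by simpa [chr_norm] using ha)
  rw [← (hsum _).tsum_sub (hsum _)]
  have hn : ∀ y, ‖a y * chr (t + τ) y - a y * chr t y‖ = ‖a y‖ * ‖chr τ y - 1‖ := by
    intro y
    rw [chr_add, show a y * (chr t y * chr τ y) - a y * chr t y
      = a y * chr t y * (chr τ y - 1) by ring, norm_mul, norm_mul, chr_norm, mul_one]
  have hle2 : ∀ y, ‖chr τ y - 1‖ ≤ 2 := fun y => by
    refine (norm_sub_le _ _).trans ?_
    rw [chr_norm]; norm_num
  have hs2 : Summable fun y => ‖a y‖ * ‖chr τ y - 1‖ :=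
    Summable.of_nonneg_of_le (fun _ => by positivity)
      (fun y => mul_le_mul_of_nonneg_left (hle2 y) (norm_nonneg _)) (ha.mul_right 2)
  refine (norm_tsum_le_tsum_norm (by simpa only [hn] using hs2)).trans ?_
  simp only [hn]
  rw [← hs2.sum_add_tsum_compl (s := F)]
  have h1 : ∑ y ∈ F, ‖a y‖ * ‖chr τ y - 1‖ ≤ ε / 2 := by
    calc _ ≤ ∑ y ∈ F, ‖a y‖ * (ε / (2 * (S + 1))) :=
          Finset.sum_le_sum fun y hy => mul_le_mul_of_nonneg_left (hτF y hy).le (norm_nonneg _)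
      _ = S * (ε / (2 * (S + 1))) := by rw [← Finset.sum_mul]
      _ ≤ (S + 1) * (ε / (2 * (S + 1))) := by gcongr; linarith
      _ = ε / 2 := by field_simp
  have h2 : ∑' y : ((F : Set (Ed d))ᶜ : Set (Ed d)), ‖a y‖ * ‖chr τ y - 1‖ ≤ ε / 2 := by
    have h3 := ha.sum_add_tsum_compl (s := F)
    calc _ ≤ ∑' y : ((F : Set (Ed d))ᶜ : Set (Ed d)), ‖a y‖ * 2 :=
          Summable.tsum_le_tsum
            (fun y => mul_le_mul_of_nonneg_left (hle2 y) (norm_nonneg _))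
            (hs2.subtype _) ((ha.mul_right 2).subtype _)
      _ = (∑' y : ((F : Set (Ed d))ᶜ : Set (Ed d)), ‖a y‖) * 2 := tsum_mul_right
      _ ≤ ε / 2 := by linarith
  linarith

lemma var_ball_bound (μ : CMeas (Ed d))
    (htb : ∃ C : ℝ, ∀ x : Ed d, μ.var (ball x 1) ≤ ENNReal.ofReal C) (R : ℝ) :
    ∃ M : ℝ, 0 ≤ M ∧ ∀ t : Ed d, μ.var (ball t R) ≤ ENNReal.ofReal M := by
  obtain ⟨C, hC⟩ := htb
  obtain ⟨u, hu, huf, hcov⟩ := Metric.finite_approx_of_totallyBounded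
    (isCompact_closedBall (0 : Ed d) R).totallyBounded 1 one_pos
  lift u to Finset (Ed d) using huf
  refine ⟨u.card * |C|, by positivity, fun t => ?_⟩
  have hsub : ball t R ⊆ ⋃ c ∈ u, ball (t + c) 1 := by
    intro x hx
    have : x - t ∈ closedBall (0 : Ed d) R := by
      rw [mem_closedBall_zero_iff, ← dist_eq_norm]; exact (mem_ball.1 hx).le
    have := hcov this
    simp only [Set.mem_iUnion, mem_ball, dist_eq_norm] at this ⊢
    obtain ⟨c, hc, h⟩ := this
    exact ⟨c, hc, by rwa [← sub_sub]⟩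
  calc μ.var (ball t R) ≤ μ.var (⋃ c ∈ u, ball (t + c) 1) := measure_mono hsub
    _ ≤ ∑ c ∈ u, μ.var (ball (t + c) 1) := measure_biUnion_finset_le _ _
    _ ≤ ∑ c ∈ u, ENNReal.ofReal |C| := Finset.sum_le_sum fun c _ =>
        (hC _).trans (ENNReal.ofReal_le_ofReal (le_abs_self C))
    _ = ENNReal.ofReal (u.card * |C|) := by
        rw [Finset.sum_const, nsmul_eq_mul, ENNReal.ofReal_mul (by positivity),
          ENNReal.ofReal_natCast]

lemma integral_bound (μ : CMeas (Ed d)) {R M : ℝ} (hM0 : 0 ≤ M) {t : Ed d}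
    (hM : μ.var (ball t R) ≤ ENNReal.ofReal M) {f : Ed d → ℂ} (hf : Measurable f)
    {B : ℝ} (hB0 : 0 ≤ B) (hB : ∀ x, ‖f x‖ ≤ B) (hsupp : ∀ x, x ∉ ball t R → f x = 0) :
    Integrable (fun x => f x * μ.den x) μ.var ∧ ∫ x, ‖f x * μ.den x‖ ∂μ.var ≤ B * M := by
  have hn : ∀ x, ‖f x * μ.den x‖ = ‖f x‖ := fun x => by rw [norm_mul, μ.norm_den, mul_one]
  have hfin : μ.var (ball t R) < ⊤ := hM.trans_lt ENNReal.ofReal_lt_top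
  have hi : Integrable ((ball t R).indicator fun _ => B) μ.var :=
    (integrableOn_const hfin.ne).integrable_indicator measurableSet_ball
  have hle : ∀ x, ‖f x * μ.den x‖ ≤ (ball t R).indicator (fun _ => B) x := by
    intro x
    rw [hn]
    by_cases hx : x ∈ ball t R
    · simpa [hx] using hB x
    · simp [hx, hsupp x hx]
  have hInt : Integrable (fun x => f x * μ.den x) μ.var :=
    hi.mono' (hf.mul μ.measurable_den).aestronglyMeasurable (Eventually.of_forall hle)
  refine ⟨hInt, (integral_mono hInt.norm hi hle).trans ?_⟩
  rw [integral_indicator measurableSet_ball, setIntegral_const, smul_eq_mul, mul_comm]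
  gcongr
  exact ENNReal.toReal_le_of_le_ofReal hM0 hM

lemma chr_contDiff (t : Ed d) : ContDiff ℝ (⊤ : ℕ∞) (fun y : Ed d => chr t y) := by
  unfold chr
  refine ContDiff.cexp (ContDiff.mul ?_ contDiff_const)
  exact Complex.ofRealCLM.contDiff.comp (contDiff_const.mul (contDiff_const.inner ℝ contDiff_id))

lemma ppm_summable (ν : PPM (Ed d)) (hνloc : ν.locFinite) (b : Ed d → ℂ) (hb : Continuous b)
    (hbc : HasCompactSupport b) : Summable fun y => ‖ν.mass y * b y‖ := by
  obtain ⟨B, hB⟩ := hbc.exists_bound_of_continuous hb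
  obtain ⟨r, hr⟩ := hbc.isCompact.isBounded.subset_ball (0 : Ed d)
  have h1 : Summable fun y : ball (0 : Ed d) r => ‖ν.mass y‖ := by
    have h := (hνloc r).ne
    unfold PPM.var at h
    have := ENNReal.tsum_coe_ne_top_iff_summable.1 h
    exact NNReal.summable_coe.2 this
  have h2 : Summable ((ball (0 : Ed d) r).indicator fun y => ‖ν.mass y‖) :=
    summable_subtype_iff_indicator.1 h1
  refine Summable.of_nonneg_of_le (fun _ => norm_nonneg _) (fun y => ?_) (h2.mul_right B)
  rw [norm_mul]
  by_cases hy : y ∈ ball (0 : Ed d) r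
  · rw [Set.indicator_of_mem hy]
    exact mul_le_mul_of_nonneg_left (hB y) (norm_nonneg _)
  · have : b y = 0 := image_eq_zero_of_notMem_tsupport fun h => hy (hr h)
    rw [Set.indicator_of_notMem hy, this]; simp

open FourierTransform in
lemma kernel_series (μ : CMeas (Ed d)) (ν : PPM (Ed d)) (hνloc : ν.locFinite)
    (hF : ∀ φ : SchwartzMap (Ed d) ℂ, HasCompactSupport φ →
      μ.pair ⇑(FourierTransform.fourierCLE ℂ (SchwartzMap (Ed d) ℂ) φ) = ν.pair ⇑φ)
    (φ : SchwartzMap (Ed d) ℂ) (hφ : HasCompactSupport φ) (n : ℝ) (hn : 0 < n) :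
    ∃ a : Ed d → ℂ, (Summable fun y => ‖a y‖) ∧ ∀ t : Ed d,
      ∫ x, (((n ^ d : ℝ) : ℂ) * (𝓕 φ) (n • (t - x))) * μ.den x ∂μ.var = ∑' y, a y * chr t y := by
  have hne : -n⁻¹ ≠ 0 := by simp [hn.ne']
  have hbc : HasCompactSupport (fun y : Ed d => φ ((-n⁻¹) • y)) := hφ.comp_smul hne
  have hbs : ContDiff ℝ (⊤ : ℕ∞) (fun y : Ed d => φ ((-n⁻¹) • y)) :=
    (φ.smooth _).comp (contDiff_const_smul _)
  refine ⟨fun y => ν.mass y * φ ((-n⁻¹) • y), ppm_summable ν hνloc _ hbs.continuous hbc,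
    fun t => ?_⟩
  have hc : HasCompactSupport (fun y : Ed d => φ ((-n⁻¹) • y) * chr t y) := hbc.mul_right
  have hs : ContDiff ℝ (⊤ : ℕ∞) (fun y : Ed d => φ ((-n⁻¹) • y) * chr t y) :=
    hbs.mul (chr_contDiff t)
  have h := hF (hc.toSchwartzMap hs) hc
  unfold CMeas.pair PPM.pair at h
  refine Eq.trans ?_ (h.trans ?_)
  · congr 1
    ext x
    congr 1
    rw [FourierTransform.fourierCLE_apply, SchwartzMap.fourier_coe, SchwartzMap.fourier_coe,
      Real.fourier_eq', Real.fourier_eq']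
    change _ = ∫ v, Complex.exp (↑(-2 * Real.pi * ⟪v, x⟫) * Complex.I) •
      (φ ((-n⁻¹) • v) * chr t v)
    have key := Measure.integral_comp_smul volume (fun z : Ed d =>
      Complex.exp (↑(-2 * Real.pi * ⟪z, n • (t - x)⟫) * Complex.I) • φ z) (-n⁻¹)
    have hcoef : |((-n⁻¹) ^ Module.finrank ℝ (Ed d))⁻¹| = n ^ d := by
      rw [finrank_euclideanSpace_fin, abs_inv, abs_pow, abs_neg, abs_inv, abs_of_pos hn]
      simp
    rw [hcoef] at key
    rw [← Complex.real_smul, ← key]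
    congr 1
    ext v
    simp only [smul_eq_mul]
    rw [mul_comm (φ _) (chr t v), ← mul_assoc]
    congr 1
    unfold chr
    rw [← Complex.exp_add]
    congr 1
    rw [inner_smul_left, inner_smul_right, inner_sub_right, real_inner_comm v t]
    simp only [conj_trivial]
    rw [← add_mul, ← Complex.ofReal_add]
    congr 2
    field_simp
    ring
  · congr 1
    ext y
    change _ * (φ ((-n⁻¹) • y) * chr t y) = _
    ring

open FourierTransform in
lemma exists_kernel (d : ℕ) : ∃ φ : SchwartzMap (Ed d) ℂ, HasCompactSupport φ ∧
    ∫ x, (𝓕 φ) x = 1 := by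
  let f : ContDiffBump (0 : Ed d) := ⟨1, 2, one_pos, one_lt_two⟩
  have hc : HasCompactSupport (fun y : Ed d => ((f y : ℝ) : ℂ)) :=
    f.hasCompactSupport.comp_left (g := fun r : ℝ => (r : ℂ)) (by simp)
  have hs : ContDiff ℝ (⊤ : ℕ∞) (fun y : Ed d => ((f y : ℝ) : ℂ)) :=
    Complex.ofRealCLM.contDiff.comp f.contDiff
  refine ⟨hc.toSchwartzMap hs, hc, ?_⟩
  set φ := hc.toSchwartzMap hs with hφ
  have h1 : 𝓕⁻ (𝓕 φ) = φ := FourierTransform.fourierInv_fourier_eq φ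
  have h2 : (𝓕⁻ (𝓕 φ)) 0 = φ 0 := by rw [h1]
  rw [SchwartzMap.fourierInv_coe, Real.fourierInv_eq'] at h2
  have h3 : φ 0 = 1 := by
    change ((f 0 : ℝ) : ℂ) = 1
    rw [f.one_of_mem_closedBall (by simp [f])]; simp
  rw [h3] at h2
  simpa using h2

lemma conv_swap (μ : CMeas (Ed d)) [SFinite μ.var] (ψ k : Ed d → ℂ) (hψ : Continuous ψ)
    (hk : Continuous k) (hki : Integrable k) (M : ℝ)
    (hI : ∀ t : Ed d, Integrable (fun x => ψ (t - x) * μ.den x) μ.var)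
    (hM : ∀ t : Ed d, ∫ x, ‖ψ (t - x) * μ.den x‖ ∂μ.var ≤ M) (n : ℝ) (hn : 0 < n) (t : Ed d) :
    ∫ s, k s * ∫ x, ψ (t - n⁻¹ • s - x) * μ.den x ∂μ.var
      = ∫ u, ψ u * ∫ x, (((n ^ d : ℝ) : ℂ) * k (n • (t - u - x))) * μ.den x ∂μ.var := by
  let F1 : Ed d → Ed d → ℂ := fun x s => k s * (ψ (t - n⁻¹ • s - x) * μ.den x)
  let F2 : Ed d → Ed d → ℂ := fun x u =>
    ψ u * ((((n ^ d : ℝ) : ℂ) * k (n • (t - u - x))) * μ.den x)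
  have hden : Measurable μ.den := μ.measurable_den
  have hm1 : AEStronglyMeasurable (Function.uncurry F1) (μ.var.prod volume) := by
    have h1 : Measurable (fun p : Ed d × Ed d => k p.2) := hk.measurable.comp measurable_snd
    have h2 : Measurable (fun p : Ed d × Ed d => ψ (t - n⁻¹ • p.2 - p.1)) :=
      Continuous.measurable (by fun_prop)
    exact (h1.mul (h2.mul (hden.comp measurable_fst))).aestronglyMeasurable
  have hm2 : AEStronglyMeasurable (Function.uncurry F2) (μ.var.prod volume) := by
    have h1 : Measurable (fun p : Ed d × Ed d => ψ p.2) := hψ.measurable.comp measurable_snd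
    have h2 : Measurable (fun p : Ed d × Ed d => ((n ^ d : ℝ) : ℂ) * k (n • (t - p.2 - p.1))) :=
      Continuous.measurable (by fun_prop)
    exact (h1.mul (h2.mul (hden.comp measurable_fst))).aestronglyMeasurable
  have hi1 : Integrable (Function.uncurry F1) (μ.var.prod volume) := by
    rw [integrable_prod_iff' hm1]
    refine ⟨Eventually.of_forall fun s => (hI (t - n⁻¹ • s)).const_mul (k s), ?_⟩
    refine (hki.norm.mul_const M).mono' hm1.norm.prod_swap.integral_prod_right' ?_
    refine Eventually.of_forall fun s => ?_
    rw [Real.norm_of_nonneg (integral_nonneg fun _ => norm_nonneg _)]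
    change ∫ x, ‖k s * (ψ (t - n⁻¹ • s - x) * μ.den x)‖ ∂μ.var ≤ _
    simp_rw [norm_mul (k s)]
    rw [integral_const_mul]
    exact mul_le_mul_of_nonneg_left (hM _) (norm_nonneg _)
  have hrel : ∀ x u, F2 x u = ((n ^ d : ℝ) : ℂ) * F1 x (n • ((t - x) - u)) := by
    intro x u
    have h1 : t - n⁻¹ • n • ((t - x) - u) - x = u := by
      rw [smul_smul, inv_mul_cancel₀ hn.ne', one_smul]; abel
    simp only [F1, F2, h1]
    rw [show t - u - x = t - x - u by abel]
    ring
  have hcoef : |(n ^ Module.finrank ℝ (Ed d))⁻¹| = (n ^ d)⁻¹ := by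
    rw [finrank_euclideanSpace_fin, abs_of_pos (by positivity)]
  have hnd : n ^ d ≠ 0 := by positivity
  have hInt : ∀ x, ∫ u, F2 x u = ∫ s, F1 x s := by
    intro x
    simp_rw [hrel]
    rw [integral_const_mul, integral_sub_left_eq_self (fun v => F1 x (n • v)) volume (t - x),
      Measure.integral_comp_smul, hcoef, Complex.real_smul, ← mul_assoc, ← Complex.ofReal_mul,
      mul_inv_cancel₀ hnd, Complex.ofReal_one, one_mul]
  have hIntN : ∀ x, ∫ u, ‖F2 x u‖ = ∫ s, ‖F1 x s‖ := by
    intro x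
    simp_rw [hrel, norm_mul]
    rw [integral_const_mul, integral_sub_left_eq_self (fun v => ‖F1 x (n • v)‖) volume (t - x),
      Measure.integral_comp_smul volume (fun v => ‖F1 x v‖), hcoef, smul_eq_mul, ← mul_assoc,
      Complex.norm_real, Real.norm_of_nonneg (by positivity), mul_inv_cancel₀ hnd, one_mul]
  have hi1' := (integrable_prod_iff hm1).1 hi1
  have hi2 : Integrable (Function.uncurry F2) (μ.var.prod volume) := by
    rw [integrable_prod_iff hm2]
    constructor
    · filter_upwards [hi1'.1] with x hx
      change Integrable (fun u => F2 x u) volume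
      simp_rw [hrel]
      refine Integrable.const_mul ?_ _
      exact ((integrable_comp_smul_iff volume (F1 x) hn.ne').2 hx).comp_sub_left (t - x)
    · change Integrable (fun x => ∫ u, ‖F2 x u‖) μ.var
      simp_rw [hIntN]
      exact hi1'.2
  calc ∫ s, k s * ∫ x, ψ (t - n⁻¹ • s - x) * μ.den x ∂μ.var
      = ∫ s, ∫ x, F1 x s ∂μ.var := by simp only [F1, integral_const_mul]
    _ = ∫ x, (∫ s, F1 x s) ∂μ.var := (integral_integral_swap hi1).symm
    _ = ∫ x, (∫ u, F2 x u) ∂μ.var := by simp_rw [hInt]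
    _ = ∫ u, ∫ x, F2 x u ∂μ.var := integral_integral_swap hi2
    _ = _ := by simp only [F2, integral_const_mul]

lemma approx_id (g k : Ed d → ℂ) (B : ℝ) (hB : ∀ t, ‖g t‖ ≤ B) (hg : UniformContinuous g)
    (hk : Integrable k) (hk1 : Integrable fun s => ‖s‖ * ‖k s‖) (hone : ∫ s, k s = 1)
    (ε : ℝ) (hε : 0 < ε) :
    ∃ n : ℝ, 0 < n ∧ ∀ t, ‖(∫ s, k s * g (t - n⁻¹ • s)) - g t‖ ≤ ε := by
  set A := ∫ s, ‖k s‖ with hA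
  set A1 := ∫ s, ‖s‖ * ‖k s‖ with hA1
  have hA0 : 0 ≤ A := integral_nonneg fun _ => norm_nonneg _
  have hA10 : 0 ≤ A1 := integral_nonneg fun _ => by positivity
  have hB0 : 0 ≤ B := (norm_nonneg _).trans (hB 0)
  obtain ⟨δ, hδ, hδg⟩ := Metric.uniformContinuous_iff.1 hg (ε / (2 * (A + 1))) (by positivity)
  set n := (2 * B / δ * A1 + 1) * (2 / ε) with hn
  have hn0 : 0 < n := by positivity
  refine ⟨n, hn0, fun t => ?_⟩
  have hmod : ∀ u, ‖g (t - u) - g t‖ ≤ ε / (2 * (A + 1)) + 2 * B / δ * ‖u‖ := by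
    intro u
    by_cases hu : ‖u‖ < δ
    · have := hδg (a := t - u) (b := t) (by rw [dist_eq_norm]; simpa using hu)
      rw [dist_eq_norm] at this
      have h2 : 0 ≤ 2 * B / δ * ‖u‖ := by positivity
      linarith
    · push Not at hu
      have h1 : ‖g (t - u) - g t‖ ≤ 2 * B := by
        refine (norm_sub_le _ _).trans ?_
        linarith [hB (t - u), hB t]
      have h2 : 2 * B ≤ 2 * B / δ * ‖u‖ := by
        rw [div_mul_eq_mul_div, le_div_iff₀ hδ]
        gcongr
      have h3 : 0 ≤ ε / (2 * (A + 1)) := by positivity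
      linarith
  have hi : Integrable fun s => k s * g (t - n⁻¹ • s) :=
    hk.mul_bdd (c := B) (hg.continuous.comp (by fun_prop)).aestronglyMeasurable
      (Eventually.of_forall fun s => hB _)
  have h1 : (∫ s, k s * g (t - n⁻¹ • s)) - g t = ∫ s, k s * (g (t - n⁻¹ • s) - g t) := by
    simp_rw [mul_sub]
    rw [integral_sub hi (hk.mul_const _), integral_mul_const, hone, one_mul]
  rw [h1]
  have h2 : ∀ s, ‖k s * (g (t - n⁻¹ • s) - g t)‖ ≤
      ε / (2 * (A + 1)) * ‖k s‖ + 2 * B / δ * n⁻¹ * (‖s‖ * ‖k s‖) := by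
    intro s
    rw [norm_mul]
    have := mul_le_mul_of_nonneg_left (hmod (n⁻¹ • s)) (norm_nonneg (k s))
    rw [norm_smul, Real.norm_of_nonneg (by positivity)] at this
    refine this.trans (le_of_eq (by ring))
  refine (norm_integral_le_of_norm_le ((hk.norm.const_mul _).add (hk1.const_mul _))
    (Eventually.of_forall h2)).trans ?_
  rw [integral_add' (hk.norm.const_mul _) (hk1.const_mul _), integral_const_mul,
    integral_const_mul, ← hA, ← hA1]
  have h3 : ε / (2 * (A + 1)) * A ≤ ε / 2 := by
    rw [div_mul_eq_mul_div, div_le_div_iff₀ (by positivity) two_pos]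
    nlinarith
  have h4 : 2 * B / δ * n⁻¹ * A1 ≤ ε / 2 := by
    have : 2 * B / δ * n⁻¹ * A1 = (2 * B / δ * A1) / n := by ring
    rw [this, div_le_iff₀ hn0, hn]
    have : ε / 2 * ((2 * B / δ * A1 + 1) * (2 / ε)) = 2 * B / δ * A1 + 1 := by
      field_simp
    linarith
  linarith

/-- **Meyer.** Let `μ` be a translation bounded complex measure on `ℝ^d` whose
distributional Fourier transform is a pure point measure. Then `μ` is an almost periodic
measure: for every continuous compactly supported `ψ`, the convolution
`(μ ⋆ ψ)(t) = ∫ ψ(t-x) dμ(x)` is well defined and Bohr almost periodic in `t`. -/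
theorem statement13 {d : ℕ} (μ : CMeas (Ed d))
    (htb : ∃ C : ℝ, ∀ x : Ed d, μ.var (ball x 1) ≤ ENNReal.ofReal C)
    (ν : PPM (Ed d)) (hνloc : ν.locFinite)
    (hF : ∀ φ : SchwartzMap (Ed d) ℂ, HasCompactSupport φ →
      μ.pair ⇑(FourierTransform.fourierCLE ℂ (SchwartzMap (Ed d) ℂ) φ) = ν.pair ⇑φ) :
    ∀ ψ : Ed d → ℂ, Continuous ψ → HasCompactSupport ψ →
      (∀ t : Ed d, Integrable (fun x => ψ (t - x) * μ.den x) μ.var) ∧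
      IsBohrAP fun t : Ed d => ∫ x, ψ (t - x) * μ.den x ∂μ.var := by
  classical
  intro ψ hψ hψc
  obtain ⟨B, hB⟩ := hψc.exists_bound_of_continuous hψ
  have hB0 : 0 ≤ B := (norm_nonneg _).trans (hB 0)
  obtain ⟨R, hR⟩ := hψc.isCompact.isBounded.subset_ball (0 : Ed d)
  have hz : ∀ z : Ed d, R ≤ ‖z‖ → ψ z = 0 := fun z hzR =>
    image_eq_zero_of_notMem_tsupport fun h => by
      have := mem_ball_zero_iff.1 (hR h)
      linarith
  obtain ⟨M, hM0, hM⟩ := var_ball_bound μ htb (R + 1)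
  have hbd : ∀ t : Ed d, Integrable (fun x => ψ (t - x) * μ.den x) μ.var ∧
      ∫ x, ‖ψ (t - x) * μ.den x‖ ∂μ.var ≤ B * M := by
    intro t
    refine integral_bound μ hM0 (hM t) (f := fun x => ψ (t - x))
      (Continuous.measurable (by fun_prop)) hB0 (fun x => hB _) (fun x hx => hz _ ?_)
    rw [mem_ball, dist_eq_norm, norm_sub_rev] at hx
    linarith
  refine ⟨fun t => (hbd t).1, ?_⟩
  set g : Ed d → ℂ := fun t => ∫ x, ψ (t - x) * μ.den x ∂μ.var with hg
  have hgB : ∀ t, ‖g t‖ ≤ B * M := fun t => (norm_integral_le_integral_norm _).trans (hbd t).2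
  have huc : UniformContinuous g := by
    have hψu : UniformContinuous ψ := hψc.uniformContinuous_of_continuous hψ
    rw [Metric.uniformContinuous_iff] at hψu ⊢
    intro ε hε
    obtain ⟨δ, hδ, hδψ⟩ := hψu (ε / (M + 1)) (by positivity)
    refine ⟨min δ 1, by positivity, fun {a b} hab => ?_⟩
    have hd : dist a b < δ := hab.trans_le (min_le_left _ _)
    have hd1 : dist a b < 1 := hab.trans_le (min_le_right _ _)
    have h := integral_bound μ hM0 (hM a) (f := fun x => ψ (a - x) - ψ (b - x))
      (Continuous.measurable (by fun_prop)) (B := ε / (M + 1)) (by positivity)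
      (fun x => by
        rw [← dist_eq_norm]
        exact (hδψ (by rwa [dist_sub_right])).le)
      (fun x hx => by
        rw [mem_ball, dist_eq_norm, norm_sub_rev] at hx
        push Not at hx
        have h1 : ‖a - x‖ ≤ ‖a - b‖ + ‖b - x‖ := by
          have := norm_add_le (a - b) (b - x)
          rwa [sub_add_sub_cancel] at this
        rw [dist_eq_norm] at hd1
        rw [hz _ (by linarith), hz _ (by linarith), sub_zero])
    have h2 : g a - g b = ∫ x, (ψ (a - x) - ψ (b - x)) * μ.den x ∂μ.var := by
      simp_rw [sub_mul]
      rw [integral_sub (hbd a).1 (hbd b).1]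
    rw [dist_eq_norm, h2]
    refine ((norm_integral_le_integral_norm _).trans h.2).trans_lt ?_
    rw [div_mul_eq_mul_div, div_lt_iff₀ (by positivity)]
    nlinarith
  refine ⟨huc.continuous, fun ε hε => ?_⟩
  have : IsLocallyFiniteMeasure μ.var := by
    obtain ⟨C, hC⟩ := htb
    exact ⟨fun x => ⟨ball x 1, ball_mem_nhds x one_pos, (hC x).trans_lt ENNReal.ofReal_lt_top⟩⟩
  obtain ⟨φ, hφ, hone⟩ := exists_kernel d
  set k : SchwartzMap (Ed d) ℂ := FourierTransform.fourier φ with hk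
  obtain ⟨n, hn, hap⟩ := approx_id g k (B * M) hgB huc k.integrable
    (by simpa using k.integrable_pow_mul volume 1) hone (ε / 4) (by positivity)
  obtain ⟨a, ha, hser⟩ := kernel_series μ ν hνloc hF φ hφ n hn
  have hψi : Integrable ψ := hψ.integrable_of_hasCompactSupport hψc
  set P := ∫ u, ‖ψ u‖ with hP
  have hP0 : 0 ≤ P := integral_nonneg fun _ => norm_nonneg _
  obtain ⟨L, hL, hLx⟩ := series_ap a ha (ε / (4 * (P + 1))) (by positivity)
  refine ⟨L, hL, fun x => ?_⟩
  obtain ⟨τ, hτ, hτG⟩ := hLx x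
  refine ⟨τ, hτ, fun y => ?_⟩
  set G : Ed d → ℂ := fun t => ∑' y, a y * chr t y with hG
  have hGc : Continuous G := by
    refine continuous_tsum (fun y => ?_) ha (fun y t => by rw [norm_mul, chr_norm, mul_one])
    unfold chr
    fun_prop
  have hGB : ∀ t, ‖G t‖ ≤ ∑' y, ‖a y‖ := fun t =>
    tsum_of_norm_bounded ha.hasSum (fun y => by rw [norm_mul, chr_norm, mul_one])
  have hconv : ∀ t, ∫ s, k s * g (t - n⁻¹ • s) = ∫ u, ψ u * G (t - u) := by
    intro t
    have := conv_swap μ ψ k hψ k.continuous k.integrable (B * M) (fun t => (hbd t).1)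
      (fun t => (hbd t).2) n hn t
    rw [hg]
    simp only at this ⊢
    rw [this]
    refine integral_congr_ae (Eventually.of_forall fun u => ?_)
    exact congrArg (fun z => ψ u * z) (hser (t - u))
  have hInt : ∀ t, Integrable fun u => ψ u * G (t - u) := fun t =>
    hψi.mul_bdd (c := ∑' y, ‖a y‖) (hGc.comp (by fun_prop)).aestronglyMeasurable
      (Eventually.of_forall fun u => hGB _)
  have hdiff : ‖(∫ u, ψ u * G (y + τ - u)) - ∫ u, ψ u * G (y - u)‖ ≤ ε / 4 := by
    rw [← integral_sub (hInt _) (hInt _)]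
    refine (norm_integral_le_of_norm_le (hψi.norm.mul_const (ε / (4 * (P + 1))))
      (Eventually.of_forall fun u => ?_)).trans ?_
    · rw [← mul_sub, norm_mul, show y + τ - u = (y - u) + τ by abel]
      exact mul_le_mul_of_nonneg_left (hτG _) (norm_nonneg _)
    · rw [integral_mul_const, ← hP, mul_div_assoc', div_le_div_iff₀ (by positivity) (by positivity)]
      nlinarith
  have e1 := hap (y + τ)
  have e2 := hap y
  rw [hconv] at e1 e2
  rw [norm_sub_rev] at e1
  calc ‖g (y + τ) - g y‖ = ‖(g (y + τ) - ∫ u, ψ u * G (y + τ - u)) +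
        ((∫ u, ψ u * G (y + τ - u)) - ∫ u, ψ u * G (y - u)) +
        ((∫ u, ψ u * G (y - u)) - g y)‖ := by congr 1; ring
    _ ≤ ε / 4 + ε / 4 + ε / 4 := (norm_add₃_le).trans (by gcongr)
    _ < ε := by linarith

end
end

section
/- Let μ be a non-negative temperate measure on ℝ^d whose distributional Fourier transform μ̂ is a (complex, locally finite) measure. Then μ is translation bounded: sup_{x∈ℝ^d} μ(B(x,1)) < ∞. -/
open MeasureTheory Metric Filter Topology Complex SchwartzMap
open scoped RealInnerProductSpace ENNReal

noncomputable section

variable {d : ℕ}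

open FourierTransform in
/-- The Fourier transform of an even bump function with small support is real and bounded
below on the unit ball. -/
lemma s14_bump (b : ContDiffBump (0 : Ed d)) (hb : b.rOut ≤ 1 / 8) :
    ∃ c : ℝ, 0 < c ∧ ∀ ξ : Ed d, (𝓕 (fun t : Ed d => (b t : ℂ)) ξ).im = 0 ∧
      (‖ξ‖ < 1 → c ≤ (𝓕 (fun t : Ed d => (b t : ℂ)) ξ).re) := by
  have hint : Integrable (fun t : Ed d => b t) volume :=
    b.continuous.integrable_of_hasCompactSupport b.hasCompactSupport
  have hpos : 0 < ∫ t : Ed d, b t := b.integral_pos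
  have hintc : ∀ ξ : Ed d, Integrable (fun t : Ed d =>
      Complex.exp (↑(-2 * Real.pi * ⟪t, ξ⟫) * I) • (b t : ℂ)) volume := by
    intro ξ
    simp only [smul_eq_mul]
    apply Continuous.integrable_of_hasCompactSupport
    · exact (by fun_prop : Continuous (fun t : Ed d =>
        Complex.exp (↑(-2 * Real.pi * ⟪t, ξ⟫) * I))).mul
        (Complex.continuous_ofReal.comp b.continuous)
    · have hs : HasCompactSupport (fun t : Ed d => (b t : ℂ)) :=
        b.hasCompactSupport.comp_left (g := fun r : ℝ => (r : ℂ)) (by simp)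
      have hs2 : HasCompactSupport (fun t : Ed d =>
        Complex.exp (↑(-2 * Real.pi * ⟪t, ξ⟫) * I) * (b t : ℂ)) := hs.mul_left
      exact hs2
  refine ⟨Real.cos (Real.pi / 4) * ∫ t : Ed d, b t, ?_, ?_⟩
  · apply mul_pos _ hpos
    rw [Real.cos_pi_div_four]; positivity
  intro ξ
  rw [Real.fourier_eq']
  have him := integral_im (hintc ξ)
  have hre := integral_re (hintc ξ)
  simp only [RCLike.re_to_complex, RCLike.im_to_complex] at him hre
  have e : ∀ t : Ed d, Complex.exp (↑(-2 * Real.pi * ⟪t, ξ⟫) * I) • (b t : ℂ)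
      = ((Real.cos (2 * Real.pi * ⟪t, ξ⟫) * b t : ℝ) : ℂ)
        + ((- (Real.sin (2 * Real.pi * ⟪t, ξ⟫) * b t) : ℝ) : ℂ) * I := by
    intro t
    rw [Complex.exp_mul_I, ← Complex.ofReal_cos, ← Complex.ofReal_sin]
    have : -2 * Real.pi * ⟪t, ξ⟫ = - (2 * Real.pi * ⟪t, ξ⟫) := by ring
    rw [this, Real.cos_neg, Real.sin_neg]
    push_cast
    rw [smul_eq_mul]
    ring
  simp only [e] at him hre ⊢
  constructor
  · rw [← him]
    have h2 : ∀ t : Ed d, (((Real.cos (2 * Real.pi * ⟪t, ξ⟫) * b t : ℝ) : ℂ)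
        + ((- (Real.sin (2 * Real.pi * ⟪t, ξ⟫) * b t) : ℝ) : ℂ) * I).im
        = - (Real.sin (2 * Real.pi * ⟪t, ξ⟫) * b t) := by
      intro t
      rw [Complex.add_im, Complex.ofReal_im, Complex.mul_I_im, Complex.ofReal_re, zero_add]
    simp only [h2]
    have h3 := integral_neg_eq_self (fun t : Ed d => - (Real.sin (2 * Real.pi * ⟪t, ξ⟫) * b t)) volume
    simp only [inner_neg_left, mul_neg, Real.sin_neg, b.neg, neg_mul, neg_neg] at h3
    rw [integral_neg] at h3 ⊢
    linarith
  · intro hξ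
    rw [← hre]
    have h2 : ∀ t : Ed d, (((Real.cos (2 * Real.pi * ⟪t, ξ⟫) * b t : ℝ) : ℂ)
        + ((- (Real.sin (2 * Real.pi * ⟪t, ξ⟫) * b t) : ℝ) : ℂ) * I).re
        = Real.cos (2 * Real.pi * ⟪t, ξ⟫) * b t := by
      intro t
      rw [Complex.add_re, Complex.ofReal_re, Complex.mul_I_re, Complex.ofReal_im, neg_zero,
        add_zero]
    simp only [h2]
    rw [← integral_const_mul]
    apply integral_mono (hint.const_mul _)
    · have h4 := (hintc ξ).re
      simp only [e, RCLike.re_to_complex, h2] at h4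
      exact h4
    intro t
    by_cases ht : ‖t‖ < 1 / 8
    · apply mul_le_mul_of_nonneg_right _ b.nonneg
      have h5 : |⟪t, ξ⟫| ≤ 1 / 8 := by
        refine (abs_real_inner_le_norm t ξ).trans ?_
        nlinarith [norm_nonneg t, norm_nonneg ξ]
      rw [← Real.cos_abs (2 * Real.pi * ⟪t, ξ⟫)]
      have h6 : |2 * Real.pi * ⟪t, ξ⟫| ≤ Real.pi / 4 := by
        rw [abs_mul, abs_of_pos (by positivity)]
        nlinarith [Real.pi_pos]
      exact Real.cos_le_cos_of_nonneg_of_le_pi (abs_nonneg _) (by linarith [Real.pi_pos]) h6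
    · have : b t = 0 := b.zero_of_le_dist (by rw [dist_zero_right]; linarith)
      simp [this]

open FourierTransform in
/-- A compactly supported Schwartz function with nonnegative Fourier transform, bounded below
on the unit ball. -/
lemma s14_test (d : ℕ) : ∃ φ : SchwartzMap (Ed d) ℂ, HasCompactSupport φ ∧
    ∃ g : Ed d → ℝ, ∃ c : ℝ, 0 < c ∧ (∀ ξ, 𝓕 (φ : Ed d → ℂ) ξ = g ξ) ∧ (∀ ξ, 0 ≤ g ξ) ∧
      ∀ ξ, ‖ξ‖ < 1 → c ≤ g ξ := by
  let b : ContDiffBump (0 : Ed d) := ⟨1 / 16, 1 / 8, by norm_num, by norm_num⟩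
  obtain ⟨c, hc, H⟩ := s14_bump b le_rfl
  have hs : HasCompactSupport (fun t : Ed d => (b t : ℂ)) :=
    b.hasCompactSupport.comp_left (g := fun r : ℝ => (r : ℂ)) (by simp)
  let ψ : SchwartzMap (Ed d) ℂ := hs.toSchwartzMap (Complex.ofRealCLM.contDiff.comp b.contDiff)
  have hψ : (ψ : Ed d → ℂ) = fun t : Ed d => (b t : ℂ) := rfl
  refine ⟨SchwartzMap.convolution (ContinuousLinearMap.mul ℂ ℂ) ψ ψ, ?_,
    fun ξ => (𝓕 (fun t : Ed d => (b t : ℂ)) ξ).re ^ 2, c ^ 2, by positivity, ?_, ?_, ?_⟩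
  · have : ((SchwartzMap.convolution (ContinuousLinearMap.mul ℂ ℂ) ψ ψ : SchwartzMap (Ed d) ℂ)
        : Ed d → ℂ) = MeasureTheory.convolution ψ ψ (ContinuousLinearMap.mul ℂ ℂ) volume :=
      funext fun x => SchwartzMap.convolution_apply _ _ _ x
    rw [this]
    exact HasCompactSupport.convolution _ hs hs
  · intro ξ
    rw [← SchwartzMap.fourier_coe, SchwartzMap.fourier_convolution_apply,
      Real.fourier_mul_convolution_eq ψ.integrable ψ.integrable, hψ]
    have h1 : 𝓕 (fun t : Ed d => (b t : ℂ)) ξ = ((𝓕 (fun t : Ed d => (b t : ℂ)) ξ).re : ℂ) := by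
      apply Complex.ext
      · simp
      · simpa using (H ξ).1
    rw [h1]
    simp [pow_two]
  · intro ξ; positivity
  · intro ξ hξ
    exact pow_le_pow_left₀ hc.le ((H ξ).2 hξ) 2

open FourierTransform in
/-- Modulation of a compactly supported Schwartz function. -/
lemma s14_mod (φ : SchwartzMap (Ed d) ℂ) (hφ : HasCompactSupport φ) (x : Ed d) :
    ∃ φx : SchwartzMap (Ed d) ℂ, HasCompactSupport φx ∧ (∀ t, ‖φx t‖ = ‖φ t‖) ∧
      ∀ ξ, 𝓕 φx ξ = 𝓕 (φ : Ed d → ℂ) (ξ - x) := by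
  have hs : HasCompactSupport (fun t : Ed d =>
      Complex.exp (↑(2 * Real.pi * ⟪t, x⟫) * I) * φ t) := hφ.mul_left
  have hc : ContDiff ℝ (⊤ : ℕ∞) (fun t : Ed d =>
      Complex.exp (↑(2 * Real.pi * ⟪t, x⟫) * I) * φ t) := by
    apply ContDiff.mul _ (φ.smooth _)
    apply ContDiff.cexp
    apply ContDiff.mul _ contDiff_const
    exact Complex.ofRealCLM.contDiff.comp (contDiff_const.mul (contDiff_id.inner ℝ contDiff_const))
  refine ⟨hs.toSchwartzMap hc, hs, ?_, ?_⟩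
  · intro t
    change ‖Complex.exp (↑(2 * Real.pi * ⟪t, x⟫) * I) * φ t‖ = _
    rw [norm_mul, Complex.norm_exp_ofReal_mul_I, one_mul]
  · intro ξ
    rw [SchwartzMap.fourier_coe, Real.fourier_eq', Real.fourier_eq']
    apply integral_congr_ae
    refine ae_of_all _ fun t => ?_
    change Complex.exp (↑(-2 * Real.pi * ⟪t, ξ⟫) * I) •
      (Complex.exp (↑(2 * Real.pi * ⟪t, x⟫) * I) * φ t) =
      Complex.exp (↑(-2 * Real.pi * ⟪t, ξ - x⟫) * I) • φ t
    rw [smul_eq_mul, smul_eq_mul, ← mul_assoc, ← Complex.exp_add, inner_sub_right]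
    congr 2
    push_cast
    ring

/-- Let `μ` be a non-negative temperate measure on `ℝ^d` whose
distributional Fourier transform is a (complex, locally finite) measure. Then `μ` is
translation bounded: `sup_x μ(B(x,1)) < ∞`. -/
theorem statement14 {d : ℕ} (μ : Measure (Ed d))
    (hμt : ∀ φ : SchwartzMap (Ed d) ℂ, Integrable (fun x => φ x) μ)
    (ν : CMeas (Ed d)) (hνloc : ν.locFinite)
    (hF : ∀ φ : SchwartzMap (Ed d) ℂ, HasCompactSupport φ →
      (∫ x, (FourierTransform.fourierCLE ℂ (SchwartzMap (Ed d) ℂ) φ) x ∂μ) = ν.pair ⇑φ) :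
    ∃ C : ℝ, ∀ x : Ed d, μ (ball x 1) ≤ ENNReal.ofReal C := by
  obtain ⟨φ, hφ, g, c, hc, hg, hg0, hg1⟩ := s14_test d
  refine ⟨(∫ t, ‖φ t‖ ∂ν.var) / c, fun x => ?_⟩
  obtain ⟨φx, hs, hn, hFx⟩ := s14_mod φ hφ x
  have h1 := hF φx hs
  have h2 := hμt (FourierTransform.fourierCLE ℂ (SchwartzMap (Ed d) ℂ) φx)
  have h3 : ∀ y, (FourierTransform.fourierCLE ℂ (SchwartzMap (Ed d) ℂ) φx) y
      = (g (y - x) : ℂ) := fun y => by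
    rw [← hg, ← hFx]; rfl
  simp only [h3] at h1 h2
  have h4 : Integrable (fun y => g (y - x)) μ := by
    simpa using h2.re
  have h5 : ∫ y, g (y - x) ∂μ ≤ ∫ t, ‖φ t‖ ∂ν.var := by
    have : ‖((∫ y, g (y - x) ∂μ : ℝ) : ℂ)‖ ≤ ∫ t, ‖φ t‖ ∂ν.var := by
      have h6 : ((∫ y, g (y - x) ∂μ : ℝ) : ℂ) = ν.pair φx :=
        (integral_ofReal (𝕜 := ℂ)).symm.trans h1
      rw [h6, CMeas.pair]
      refine (norm_integral_le_integral_norm _).trans (le_of_eq ?_)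
      simp [ν.norm_den, hn]
    rw [Complex.norm_real] at this
    exact (Real.le_norm_self _).trans this
  have h7 : ENNReal.ofReal c * μ (ball x 1) ≤ ENNReal.ofReal (∫ t, ‖φ t‖ ∂ν.var) := by
    calc ENNReal.ofReal c * μ (ball x 1) = ∫⁻ _ in ball x 1, ENNReal.ofReal c ∂μ := by
          rw [setLIntegral_const]
      _ ≤ ∫⁻ y in ball x 1, ENNReal.ofReal (g (y - x)) ∂μ := by
          apply setLIntegral_mono' measurableSet_ball
          intro y hy
          apply ENNReal.ofReal_le_ofReal
          apply hg1
          rwa [mem_ball, dist_eq_norm] at hy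
      _ ≤ ∫⁻ y, ENNReal.ofReal (g (y - x)) ∂μ := setLIntegral_le_lintegral _ _
      _ = ENNReal.ofReal (∫ y, g (y - x) ∂μ) :=
          (ofReal_integral_eq_lintegral_ofReal h4 (ae_of_all _ fun y => hg0 _)).symm
      _ ≤ _ := ENNReal.ofReal_le_ofReal h5
  rw [ENNReal.ofReal_div_of_pos hc, ENNReal.le_div_iff_mul_le (by simp [hc]) (by simp), mul_comm]
  exact h7

end
end

section
/- Let μ be a complex measure on ℝ^d which is a temperate distribution and whose distributional Fourier transform is a pure point measure μ̂ = Σ_{γ∈Γ} b_γ δ_γ. Then for every C^∞ compactly supported function φ on ℝ^d, the convolution of μ with the inverse Fourier transform φ̌ satisfies (μ⋆φ̌)(t) = Σ_{γ ∈ Γ ∩ supp φ} b_γ φ(γ) e^{2πi t·γ} for all t ∈ ℝ^d, where Σ_{γ ∈ Γ ∩ supp φ} |b_γ| |φ(γ)| < ∞; in particular μ⋆φ̌ is a Bohr almost periodic function. -/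
open MeasureTheory Metric Filter Topology Complex SchwartzMap
open scoped RealInnerProductSpace ENNReal

noncomputable section

variable {d : ℕ}

/-- The character `t ↦ e^{2πi t·γ}`. -/
def chr15 {d : ℕ} (t γ : Ed d) : ℂ :=
  Complex.exp (((2 * Real.pi * ⟪t, γ⟫ : ℝ) : ℂ) * Complex.I)

lemma chr15_norm {d : ℕ} (t γ : Ed d) : ‖chr15 t γ‖ = 1 :=
  Complex.norm_exp_ofReal_mul_I _

lemma chr15_add {d : ℕ} (s t γ : Ed d) : chr15 (s + t) γ = chr15 s γ * chr15 t γ := by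
  unfold chr15
  rw [← Complex.exp_add, inner_add_left]
  congr 1
  push_cast
  ring

lemma chr15_sub {d : ℕ} (s t γ : Ed d) :
    ‖chr15 (s - t) γ - 1‖ = ‖chr15 s γ - chr15 t γ‖ := by
  have h : chr15 s γ - chr15 t γ = (chr15 (s - t) γ - 1) * chr15 t γ := by
    rw [sub_mul, ← chr15_add, sub_add_cancel, one_mul]
  rw [h, norm_mul, chr15_norm, mul_one]

lemma chr15_cont {d : ℕ} (γ : Ed d) : Continuous fun t => chr15 t γ := by
  unfold chr15
  fun_prop

lemma chr15_finite {d : ℕ} (F : Finset (Ed d)) (δ : ℝ) (hδ : 0 < δ) :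
    ∃ L : ℝ, 0 < L ∧ ∀ x : Ed d, ∃ τ : Ed d, dist τ x < L ∧ ∀ γ ∈ F, ‖chr15 τ γ - 1‖ < δ := by
  let T : Ed d → (F → ℂ) := fun x γ => chr15 x γ
  have hb : Set.range T ⊆ closedBall 0 1 := by
    rintro _ ⟨x, rfl⟩
    rw [mem_closedBall_zero_iff, pi_norm_le_iff_of_nonneg zero_le_one]
    intro γ
    exact (chr15_norm x γ).le
  have htb : TotallyBounded (Set.range T) :=
    (isCompact_closedBall (0 : F → ℂ) 1).totallyBounded.subset hb
  obtain ⟨t, hts, hfin, hcov⟩ := Metric.finite_approx_of_totallyBounded htb δ hδ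
  choose! p hp using fun y (hy : y ∈ t) => hts hy
  obtain ⟨M, hM⟩ := (hfin.image fun y => ‖p y‖).bddAbove
  refine ⟨|M| + 1, by positivity, fun x => ?_⟩
  have hx := hcov ⟨x, rfl⟩
  simp only [Set.mem_iUnion] at hx
  obtain ⟨y, hy, hxy⟩ := hx
  refine ⟨x - p y, ?_, ?_⟩
  · have h1 : ‖p y‖ ≤ M := hM ⟨y, hy, rfl⟩
    rw [dist_eq_norm, sub_sub_cancel_left, norm_neg]
    have := le_abs_self M
    linarith
  · intro γ hγ
    rw [chr15_sub]
    rw [mem_ball, ← hp y hy, dist_pi_lt_iff hδ] at hxy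
    simpa [T, dist_eq_norm] using hxy ⟨γ, hγ⟩

lemma bohr15 {d : ℕ} (c : Ed d → ℂ) (hc : Summable fun γ => ‖c γ‖) :
    IsBohrAP fun t : Ed d => ∑' γ, c γ * chr15 t γ := by
  have hbd : ∀ γ t, ‖c γ * chr15 t γ‖ ≤ ‖c γ‖ := fun γ t => by
    rw [norm_mul, chr15_norm, mul_one]
  refine ⟨continuous_tsum (fun γ => continuous_const.mul (chr15_cont γ)) hc hbd, ?_⟩
  intro ε hε
  have hu := tendstoUniformly_tsum hc hbd
  rw [Metric.tendstoUniformly_iff] at hu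
  obtain ⟨F, hF⟩ := (hu (ε / 3) (by positivity)).exists
  set S := ∑ γ ∈ F, ‖c γ‖ with hS
  have hS0 : 0 ≤ S := Finset.sum_nonneg fun _ _ => norm_nonneg _
  obtain ⟨L, hL, hLx⟩ := chr15_finite F (ε / 3 / (S + 1)) (by positivity)
  refine ⟨L, hL, fun x => ?_⟩
  obtain ⟨τ, hτ, hτF⟩ := hLx x
  refine ⟨τ, hτ, fun y => ?_⟩
  have h1 := hF (y + τ)
  have h2 := hF y
  have h3 : dist (∑ γ ∈ F, c γ * chr15 (y + τ) γ) (∑ γ ∈ F, c γ * chr15 y γ) ≤ ε / 3 := by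
    rw [dist_eq_norm, ← Finset.sum_sub_distrib]
    calc _ ≤ ∑ γ ∈ F, ‖c γ‖ * (ε / 3 / (S + 1)) := by
          refine norm_sum_le_of_le _ fun γ hγ => ?_
          have : c γ * chr15 (y + τ) γ - c γ * chr15 y γ
              = c γ * (chr15 y γ * (chr15 τ γ - 1)) := by rw [chr15_add]; ring
          rw [this, norm_mul, norm_mul, chr15_norm, one_mul]
          exact mul_le_mul_of_nonneg_left (hτF γ hγ).le (norm_nonneg _)
      _ = S * (ε / 3 / (S + 1)) := by rw [← Finset.sum_mul]
      _ ≤ (S + 1) * (ε / 3 / (S + 1)) := by gcongr; linarith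
      _ = ε / 3 := by field_simp
  rw [← dist_eq_norm]
  rw [dist_comm] at h2
  have := dist_triangle4 (∑' γ, c γ * chr15 (y + τ) γ) (∑ γ ∈ F, c γ * chr15 (y + τ) γ)
    (∑ γ ∈ F, c γ * chr15 y γ) (∑' γ, c γ * chr15 y γ)
  linarith

lemma summable15 {d : ℕ} (ν : PPM (Ed d)) (hν : ν.locFinite) (φ : SchwartzMap (Ed d) ℂ)
    (hφ : HasCompactSupport φ) : Summable (fun γ : Ed d => ‖ν.mass γ * φ γ‖) := by
  obtain ⟨r, hr⟩ := hφ.isCompact.isBounded.subset_ball 0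
  obtain ⟨C, hC⟩ := hφ.exists_bound_of_continuous φ.continuous
  have h1 : Summable fun x : ball (0 : Ed d) r => ‖ν.mass x‖₊ :=
    ENNReal.tsum_coe_ne_top_iff_summable.1 (hν r).ne
  have h2 : Summable fun x : ball (0 : Ed d) r => ‖ν.mass x * φ x‖ := by
    refine Summable.of_nonneg_of_le (fun _ => norm_nonneg _) (fun x => ?_)
      ((NNReal.summable_coe.2 h1).mul_right C)
    rw [norm_mul]
    exact mul_le_mul_of_nonneg_left (hC _) (norm_nonneg _)
  refine (Function.Injective.summable_iff (f := fun γ : Ed d => ‖ν.mass γ * φ γ‖)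
    (Subtype.val_injective (p := fun x => x ∈ ball (0 : Ed d) r)) ?_).1 h2
  intro x hx
  have : φ x = 0 := by
    by_contra h
    exact hx ⟨⟨x, hr (subset_closure h)⟩, rfl⟩
  simp [this]

lemma modulate15 {d : ℕ} (φ : SchwartzMap (Ed d) ℂ) (hφ : HasCompactSupport φ) (t : Ed d) :
    ∃ ψ : SchwartzMap (Ed d) ℂ, HasCompactSupport ψ ∧ (∀ γ, ψ γ = φ γ * chr15 t γ) ∧
      ∀ x, (FourierTransform.fourierCLE ℂ (SchwartzMap (Ed d) ℂ) ψ) x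
        = ((FourierTransform.fourierCLE ℂ (SchwartzMap (Ed d) ℂ)).symm φ) (t - x) := by
  have hcs : HasCompactSupport fun γ => φ γ * chr15 t γ := hφ.mul_right
  have hsm : ContDiff ℝ (⊤ : ℕ∞) fun γ => φ γ * chr15 t γ := by
    refine (φ.smooth _).mul ?_
    unfold chr15
    refine ContDiff.cexp (ContDiff.mul ?_ contDiff_const)
    exact Complex.ofRealCLM.contDiff.comp
      (contDiff_const.mul (contDiff_const.inner ℝ contDiff_id))
  refine ⟨hcs.toSchwartzMap hsm, hcs, fun γ => rfl, fun x => ?_⟩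
  rw [FourierTransform.fourierCLE_apply, FourierTransform.fourierCLE_symm_apply,
    SchwartzMap.fourier_coe, SchwartzMap.fourierInv_coe, Real.fourier_eq', Real.fourierInv_eq']
  refine integral_congr_ae (Eventually.of_forall fun v => ?_)
  change _ * (φ v * chr15 t v) = _ * φ v
  rw [mul_left_comm, mul_comm (φ v)]
  congr 1
  unfold chr15
  rw [← Complex.exp_add, inner_sub_right, real_inner_comm t v]
  congr 1
  push_cast
  ring

/-- Let `μ` be a temperate complex measure on `ℝ^d` whose Fourier transform
is the pure point measure `ν = Σ_γ b_γ δ_γ`. Then for every `C^∞` compactly supported `φ`,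
`(μ ⋆ φ̌)(t) = Σ_γ b_γ φ(γ) e^{2πi t·γ}` with `Σ_γ |b_γ||φ(γ)| < ∞`; in particular
`μ ⋆ φ̌` is Bohr almost periodic. -/
theorem statement15 {d : ℕ} (μ : CMeas (Ed d)) (hμloc : μ.locFinite) (hμt : μ.temperate)
    (ν : PPM (Ed d)) (hνloc : ν.locFinite)
    (hF : ∀ φ : SchwartzMap (Ed d) ℂ, HasCompactSupport φ →
      μ.pair ⇑(FourierTransform.fourierCLE ℂ (SchwartzMap (Ed d) ℂ) φ) = ν.pair ⇑φ) :
    ∀ φ : SchwartzMap (Ed d) ℂ, HasCompactSupport φ →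
      Summable (fun γ : Ed d => ‖ν.mass γ * φ γ‖) ∧
      (∀ t : Ed d,
        Integrable (fun x => ((FourierTransform.fourierCLE ℂ (SchwartzMap (Ed d) ℂ)).symm φ) (t - x) * μ.den x) μ.var ∧
        (∫ x, ((FourierTransform.fourierCLE ℂ (SchwartzMap (Ed d) ℂ)).symm φ) (t - x) * μ.den x ∂μ.var) =
          ∑' γ : Ed d, ν.mass γ * φ γ *
            Complex.exp (((2 * Real.pi * ⟪t, γ⟫ : ℝ) : ℂ) * Complex.I)) ∧
      IsBohrAP fun t : Ed d =>
        ∫ x, ((FourierTransform.fourierCLE ℂ (SchwartzMap (Ed d) ℂ)).symm φ) (t - x) * μ.den x ∂μ.var := by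


  intro φ hφ
  have hs := summable15 ν hνloc φ hφ
  have key : ∀ t : Ed d,
        Integrable (fun x => ((FourierTransform.fourierCLE ℂ (SchwartzMap (Ed d) ℂ)).symm φ) (t - x) * μ.den x) μ.var ∧
        (∫ x, ((FourierTransform.fourierCLE ℂ (SchwartzMap (Ed d) ℂ)).symm φ) (t - x) * μ.den x ∂μ.var) =
          ∑' γ : Ed d, ν.mass γ * φ γ * chr15 t γ := by
    intro t
    obtain ⟨ψ, hψc, hψ, hψF⟩ := modulate15 φ hφ t
    simp only [← hψF]
    refine ⟨hμt _, ?_⟩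
    have := hF ψ hψc
    simp only [CMeas.pair, PPM.pair] at this
    rw [this]
    simp only [hψ, mul_assoc]
  refine ⟨hs, key, ?_⟩
  simp only [(key _).2]
  exact bohr15 _ hs

end
end
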